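/- Let X be a nonempty set, f : X → ℝ bounded, and V : X → ℝ bounded below. Define W(α) := inf_{x∈X}(αf(x) + V(x)) for α ∈ [0,1] (so W is finite and concave on [0,1], being an infimum of affine functions of α). Suppose that for every α ∈ (0,1) there is μ_α ∈ X attaining the infimum of αf + V over X, and that W is differentiable at every α ∈ (0,1). Then inf_{x∈X}(f(x) + V(x)) − inf_{x∈X} V(x) = ∫₀¹ f(μ_α) dα, where the integrand equals W′(α) for α ∈ (0,1) and is bounded and measurable. -/

import Mathlib

open MeasureTheory

/-!
The idea is the envelope theorem. As an infimum of `C`-Lipschitz functions of `α`, `W` is itself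
`C`-Lipschitz, hence absolutely continuous: it is differentiable almost everywhere and is the
integral of its derivative. The affine function `α ↦ α * f x + V x` lies above `W` and touches it at
every `α` for which `x` is a minimizer, so wherever `W` is differentiable its derivative is
the slope `f x`.
-/

open Filter Set Topology
open scoped Interval NNReal

section LipschitzFamily

variable {ι E : Type*} [PseudoMetricSpace E] {K : ℝ≥0} {F : ι → E → ℝ}

lemma bddBelow_range_of_lipschitzWith (hF : ∀ i, LipschitzWith K (F i)) {s : E}
    (hs : BddBelow (range fun i => F i s)) (t : E) : BddBelow (range fun i => F i t) := by
  obtain ⟨m, hm⟩ := hs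
  refine ⟨m - K * dist s t, forall_mem_range.2 fun i => ?_⟩
  have hm_le : m ≤ F i s := hm (mem_range_self i)
  linarith [(hF i).le_add_mul s t]

lemma lipschitzWith_iInf [Nonempty ι] (hF : ∀ i, LipschitzWith K (F i))
    (hbdd : ∀ t, BddBelow (range fun i => F i t)) :
    LipschitzWith K fun t => ⨅ i, F i t := by
  refine LipschitzWith.of_le_add_mul K fun s t => ?_
  rw [← sub_le_iff_le_add]
  refine le_ciInf fun i => sub_le_iff_le_add.2 ?_
  calc ⨅ j, F j s ≤ F i s := ciInf_le (hbdd s) i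
    _ ≤ F i t + K * dist s t := (hF i).le_add_mul s t

end LipschitzFamily

section Envelope

variable {ι : Type*} {F : ι → ℝ → ℝ}

lemma hasDerivAt_unique_of_eventuallyLE {f g : ℝ → ℝ} {f' g' t : ℝ} (hf : HasDerivAt f f' t)
    (hg : HasDerivAt g g' t) (hle : f ≤ᶠ[𝓝 t] g) (heq : f t = g t) : f' = g' := by
  have hmax : IsLocalMax (f - g) t := by
    filter_upwards [hle] with s hs
    simpa only [Pi.sub_apply, heq, sub_self, sub_nonpos] using hs
  exact sub_eq_zero.1 (hmax.hasDerivAt_eq_zero (hf.sub hg))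

lemma deriv_iInf_eq_of_forall_le {i : ι} {t d : ℝ}
    (hbdd : ∀ᶠ s in 𝓝 t, BddBelow (range fun j => F j s)) (hmin : ∀ j, F i t ≤ F j t)
    (hF : HasDerivAt (F i) d t) (hdiff : DifferentiableAt ℝ (fun s => ⨅ j, F j s) t) :
    deriv (fun s => ⨅ j, F j s) t = d := by
  have : Nonempty ι := ⟨i⟩
  refine hasDerivAt_unique_of_eventuallyLE hdiff.hasDerivAt hF ?_ ?_
  · filter_upwards [hbdd] with s hs using ciInf_le hs i
  · exact le_antisymm (ciInf_le hbdd.self_of_nhds i) (le_ciInf hmin)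

theorem intervalIntegrable_and_integral_eq_iInf_sub_iInf {K : ℝ≥0} {μ : ℝ → ι} {d : ℝ → ℝ}
    {a b : ℝ} (hLip : ∀ i, LipschitzWith K (F i)) (hbdd : ∀ t, BddBelow (range fun i => F i t))
    (hmin : ∀ᵐ t ∂volume.restrict (Ι a b), ∀ i, F (μ t) t ≤ F i t)
    (hd : ∀ᵐ t ∂volume.restrict (Ι a b), HasDerivAt (F (μ t)) (d t) t) :
    IntervalIntegrable d volume a b ∧
      ∫ t in a..b, d t = (⨅ i, F i b) - ⨅ i, F i a := by
  have : Nonempty ι := ⟨μ a⟩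
  have hW : LipschitzWith K fun t => ⨅ i, F i t := lipschitzWith_iInf hLip hbdd
  have hderiv : deriv (fun t => ⨅ i, F i t) =ᵐ[volume.restrict (Ι a b)] d := by
    filter_upwards [hmin, hd, ae_restrict_of_ae hW.ae_differentiableAt] with t hmin_t hd_t hdiff_t
    exact deriv_iInf_eq_of_forall_le (Eventually.of_forall hbdd) hmin_t hd_t hdiff_t
  have hAC : AbsolutelyContinuousOnInterval (fun t => ⨅ i, F i t) a b :=
    hW.lipschitzOnWith.absolutelyContinuousOnInterval
  exact ⟨hAC.intervalIntegrable_deriv.congr_ae hderiv,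
    (intervalIntegral.integral_congr_ae_restrict hderiv).symm.trans hAC.integral_deriv_eq_sub⟩

end Envelope

lemma lipschitzWith_mul_const_add_const {c C : ℝ} (hc : |c| ≤ C) (v : ℝ) :
    LipschitzWith C.toNNReal fun α : ℝ => α * c + v := by
  refine LipschitzWith.of_dist_le' fun α β => ?_
  rw [dist_add_right, Real.dist_eq, ← sub_mul, abs_mul, mul_comm, ← Real.dist_eq]
  gcongr

lemma hasDerivAt_mul_const_add_const (c v α : ℝ) : HasDerivAt (fun β => β * c + v) c α :=
  (hasDerivAt_mul_const c).add_const v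

theorem free_energy_integral_representation_general
    {X : Type*} (f V : X → ℝ)
    (C : ℝ) (hf : ∀ x, |f x| ≤ C)
    (hV : BddBelow (Set.range V))
    (W : ℝ → ℝ) (hW : W = fun α => ⨅ x, (α * f x + V x))
    (μ : ℝ → X)
    (hmin : ∀ α ∈ Set.Ioo (0 : ℝ) 1, ∀ x, α * f (μ α) + V (μ α) ≤ α * f x + V x) :
    (∀ α ∈ Set.Ioo (0 : ℝ) 1, DifferentiableAt ℝ W α → f (μ α) = deriv W α) ∧
      IntegrableOn (fun α => f (μ α)) (Set.Ioo 0 1) ∧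
      (⨅ x, (f x + V x)) - (⨅ x, V x) = ∫ α in Set.Ioo (0 : ℝ) 1, f (μ α) := by
  subst hW
  have hLip (x : X) := lipschitzWith_mul_const_add_const (hf x) (V x)
  have hbdd : ∀ α, BddBelow (range fun x => α * f x + V x) :=
    bddBelow_range_of_lipschitzWith hLip (s := 0) (by simpa only [zero_mul, zero_add] using hV)
  have hmin_ae : ∀ᵐ α ∂volume.restrict (Ι 0 1), ∀ x, α * f (μ α) + V (μ α) ≤ α * f x + V x := by
    rw [uIoc_of_le zero_le_one, ← restrict_Ioo_eq_restrict_Ioc]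
    exact ae_restrict_of_forall_mem measurableSet_Ioo hmin
  obtain ⟨hint, hintegral⟩ := intervalIntegrable_and_integral_eq_iInf_sub_iInf hLip hbdd hmin_ae
    (ae_of_all _ fun α => hasDerivAt_mul_const_add_const (f (μ α)) (V (μ α)) α)
  refine ⟨fun α hα hdiff => ?_, ?_, ?_⟩
  · exact (deriv_iInf_eq_of_forall_le (Eventually.of_forall hbdd) (hmin α hα)
      (hasDerivAt_mul_const_add_const _ _ α) hdiff).symm
  · exact (intervalIntegrable_iff_integrableOn_Ioo_of_le zero_le_one).1 hint
  · rw [← integral_Ioc_eq_integral_Ioo, ← intervalIntegral.integral_of_le zero_le_one, hintegral]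
    simp only [one_mul, zero_mul, zero_add]

/-- Abstract content of formula (12): integrating the derivative formula
`(d/dα) inf_x (α f + V) = f(μ_α)` over `α ∈ [0,1]` gives the representation of the
free energy `inf (f + V) - inf V` as an integral over minimizers of the
interpolating variational problems. -/
theorem free_energy_integral_representation
    {X : Type*} [Nonempty X] (f V : X → ℝ)
    (C : ℝ) (hf : ∀ x, |f x| ≤ C)
    (hV : BddBelow (Set.range V))
    (W : ℝ → ℝ) (hW : W = fun α => ⨅ x, (α * f x + V x))
    (μ : ℝ → X)
    (hmin : ∀ α ∈ Set.Ioo (0 : ℝ) 1, ∀ x, α * f (μ α) + V (μ α) ≤ α * f x + V x)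
    (hdiff : ∀ α ∈ Set.Ioo (0 : ℝ) 1, DifferentiableAt ℝ W α) :
    (∀ α ∈ Set.Ioo (0 : ℝ) 1, f (μ α) = deriv W α) ∧
      (⨅ x, (f x + V x)) - (⨅ x, V x) = ∫ α in Set.Ioo (0 : ℝ) 1, f (μ α) := by
  obtain ⟨hderiv, -, hintegral⟩ :=
    free_energy_integral_representation_general f V C hf hV W hW μ hmin
  exact ⟨fun α hα => hderiv α hα (hdiff α hα), hintegral⟩
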